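/- Let ε ∈ (0,1) be a quadratic irrational whose conjugate satisfies ε′ < 0, and let Λ = p + qε (p, q ∈ ℚ) with conjugate Λ′ = p + qε′ satisfy Λ·Λ′ ∈ {1, −1}, Λ·ℤ[ε] = ℤ[ε], Λ > 1 and Λ′ ∈ (0,1). Let l, c satisfy max(ε, 1−ε) < l < 1 and c ≤ 0 < c + l, let T be the associated exchange of three intervals on [c, c+l), and set J := [Λ′c, Λ′(c+l)). Then every x ∈ J returns to J under T, and, denoting by n the least positive integer with Tⁿ(x) ∈ J, one has Tⁿ(x) = Λ′·T(x/Λ′); that is, the first return map T_J is homothetic to T with ratio Λ′. -/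

import Mathlib

/-- The set `ℤ[ε] = {a + bε : a, b ∈ ℤ}`. -/
def Zbr (ε : ℝ) : Set ℝ := {x | ∃ a b : ℤ, x = (a : ℝ) + (b : ℝ) * ε}

/-- The exchange of three intervals on `[c, c+l)` with parameters `ε, l, c`. -/
noncomputable def T3 (ε l c : ℝ) (x : ℝ) : ℝ :=
  if x < c + l - 1 + ε then x + 1 - ε
  else if x < c + ε then x + 1 - 2 * ε
  else x - ε

/-!
Let `σ (a + bε) = a + bε'` be the conjugation of `ℤ[ε]`. Since `ε' < 0`, an element of `ℤ[ε]`
of absolute value less than `1` has positive conjugate exactly when it is a nontrivial sum of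
the translations `1 - ε` and `-ε`; hence on `[c, c + l)` the point `y` lies on the strict forward
orbit of `x` if and only if `y - x ∈ ℤ[ε]` and `σ (y - x) > 0`. In other words, `T` is the
successor map of the order that `σ` induces on each coset of `ℤ[ε]`.

Multiplication by `Λ' = Λ⁻¹` maps `[c, c + l)` onto `J`, preserves `ℤ[ε]` and multiplies
conjugates by `Λ > 0`. It therefore preserves this order and carries immediate successors in
`[c, c + l)` to immediate successors in `J`, which are the first returns.
-/

open Function Polynomial Set

section FirstReturn

variable {α : Type*} {f h : α → α} {I : Set α} {x : α}

/-- `y` lies on the strict forward orbit of `x` under `f`: it is reached after at least one step,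
so `Reaches f x x` says that `x` is periodic. -/
def Reaches (f : α → α) (x y : α) : Prop := ∃ k : ℕ, 1 ≤ k ∧ f^[k] x = y

theorem reaches_apply (f : α → α) (x : α) : Reaches f x (f x) := ⟨1, le_rfl, rfl⟩

theorem iterate_eq_of_firstReturn (hf : MapsTo f I I) (hper : Disjoint I (periodicPts f))
    (hreach : ∀ x ∈ I, ∀ y ∈ I, Reaches f (h x) (h y) ↔ Reaches f x y) (hx : x ∈ I) {n : ℕ}
    (hn : 1 ≤ n) (hmem : f^[n] (h x) ∈ h '' I)
    (hfirst : ∀ m : ℕ, 1 ≤ m → m < n → f^[m] (h x) ∉ h '' I) :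
    f^[n] (h x) = h (f x) := by
  obtain ⟨k, hk, hkx⟩ := (hreach x hx (f x) (hf hx)).mpr (reaches_apply f x)
  obtain hkn | rfl | hnk := lt_trichotomy k n
  · exact absurd (hkx ▸ mem_image_of_mem h (hf hx)) (hfirst k hk hkn)
  · exact hkx
  · -- An earlier return `h z` would put `z` strictly between `x` and `f x`.
    obtain ⟨z, hz, hzx⟩ := hmem
    obtain ⟨j, hj, rfl⟩ := (hreach x hx z hz).mp ⟨n, hn, hzx.symm⟩
    obtain ⟨i, hi, hix⟩ := (hreach _ hz (f x) (hf hx)).mp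
      ⟨k - n, by omega, by rw [hzx, ← iterate_add_apply, Nat.sub_add_cancel hnk.le, hkx]⟩
    have hperiod : IsPeriodicPt f (i + (j - 1)) (f x) := by
      rw [IsPeriodicPt, IsFixedPt, ← iterate_succ_apply, Nat.succ_eq_add_one,
        show i + (j - 1) + 1 = i + j by omega, iterate_add_apply, hix]
    have hfx : f x ∈ periodicPts f := mk_mem_periodicPts (by omega) hperiod
    exact absurd hfx (hper.notMem_of_mem_left (hf hx))

end FirstReturn

section Conjugation

variable {K L : Type*} [Field K] [Field L] [Algebra K L] {x y : L} {P : K[X]}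

theorem isConjRoot_of_natDegree_eq_two (hP : P.natDegree = 2) (hx : x ∉ (algebraMap K L).range)
    (hPx : aeval x P = 0) (hPy : aeval y P = 0) : IsConjRoot K x y := by
  have hP0 : P ≠ 0 := by rintro rfl; simp at hP
  have hint : IsIntegral K x := IsAlgebraic.isIntegral ⟨P, hP0, hPx⟩
  have hassoc : Associated (minpoly K x) P :=
    associated_of_dvd_of_natDegree_le (minpoly.dvd K x hPx) hP0
      (hP ▸ (minpoly.two_le_natDegree_iff hint).mpr hx)
  exact isConjRoot_of_aeval_eq_zero hint (aeval_eq_zero_of_dvd_aeval_eq_zero hassoc.symm.dvd hPy)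

theorem aeval_eq_zero_of_isConjRoot (hxy : IsConjRoot K x y) (hPx : aeval x P = 0) :
    aeval y P = 0 :=
  aeval_eq_zero_of_dvd_aeval_eq_zero (minpoly.dvd K x hPx) hxy.aeval_eq_zero

theorem mul_linear_eq_linear_of_isConjRoot (hxy : IsConjRoot K x y) {p q r s t u : K}
    (h : (algebraMap K L p + algebraMap K L q * x) * (algebraMap K L r + algebraMap K L s * x) =
      algebraMap K L t + algebraMap K L u * x) :
    (algebraMap K L p + algebraMap K L q * y) * (algebraMap K L r + algebraMap K L s * y) =
      algebraMap K L t + algebraMap K L u * y := by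
  have hPy := aeval_eq_zero_of_isConjRoot hxy
    (P := (C p + C q * X) * (C r + C s * X) - (C t + C u * X)) (by simpa [sub_eq_zero] using h)
  simpa [sub_eq_zero] using hPy

end Conjugation

theorem isConjRoot_of_irrational_of_quadratic {ε : ℝ} {A B C : ℤ} (hA : A ≠ 0)
    (hε : Irrational ε) (hquad : (A : ℝ) * ε ^ 2 + (B : ℝ) * ε + (C : ℝ) = 0) :
    IsConjRoot ℚ ε (-(B : ℝ) / (A : ℝ) - ε) := by
  have hA' : (A : ℝ) ≠ 0 := Int.cast_ne_zero.mpr hA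
  have hroot : (A : ℝ) * (-B / A - ε) ^ 2 + B * (-B / A - ε) + C = 0 := by
    field_simp
    linear_combination (A : ℝ) * hquad
  exact isConjRoot_of_natDegree_eq_two
    (natDegree_quadratic (a := (A : ℚ)) (b := B) (c := C) (Int.cast_ne_zero.mpr hA)) hε
    (by simpa using hquad) (by simpa using hroot)

section ConjPos

variable {ε' ε d : ℝ}

/-- `d ∈ ℤ[ε]` and its conjugate, obtained by replacing `ε` with `ε'`, is positive. -/
def ConjPos (ε ε' d : ℝ) : Prop := ∃ a b : ℤ, d = a + b * ε ∧ 0 < (a : ℝ) + b * ε'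

theorem conjPos_mul_iff (hconj : IsConjRoot ℚ ε ε') {p q : ℚ}
    (hZ : (fun z => ((p : ℝ) + q * ε) * z) '' Zbr ε = Zbr ε) (hΛ : (p : ℝ) + q * ε ≠ 0)
    (hΛ' : 0 < (p : ℝ) + q * ε') : ConjPos ε ε' ((p + q * ε) * d) ↔ ConjPos ε ε' d := by
  have hmul {a b r s : ℤ} (h : ((p : ℝ) + q * ε) * (r + s * ε) = a + b * ε) :
      ((p : ℝ) + q * ε') * (r + s * ε') = a + b * ε' := by
    simpa using mul_linear_eq_linear_of_isConjRoot hconj (p := p) (q := q) (r := r) (s := s)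
      (t := a) (u := b) (by simpa using h)
  constructor
  · rintro ⟨a, b, hd, hpos⟩
    obtain ⟨_, ⟨r, s, rfl⟩, hrs⟩ := hZ.superset ⟨a, b, rfl⟩
    exact ⟨r, s, mul_left_cancel₀ hΛ (hd.trans hrs.symm),
      pos_of_mul_pos_right (hmul hrs ▸ hpos) hΛ'.le⟩
  · rintro ⟨r, s, rfl, hpos⟩
    obtain ⟨a, b, hab⟩ := hZ.subset (mem_image_of_mem _ ⟨r, s, rfl⟩)
    exact ⟨a, b, hab, hmul hab ▸ mul_pos hΛ' hpos⟩

theorem conjPos_of_nat_displacement (hε' : ε' < 0) {m n : ℕ} (hmn : 0 < m + n) :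
    ConjPos ε ε' (n * (1 - ε) - m * ε) := by
  have hmn' : (0 : ℝ) < m + n := mod_cast hmn
  refine ⟨n, -(m + n), by push_cast; ring, ?_⟩
  push_cast
  have hneg := mul_neg_of_pos_of_neg hmn' hε'
  linarith [n.cast_nonneg (α := ℝ)]

theorem exists_nat_displacement_of_conjPos (hε : ε ∈ Ioo (0 : ℝ) 1) (hε' : ε' < 0)
    (hd : |d| < 1) (hpos : ConjPos ε ε' d) :
    ∃ m n : ℕ, 0 < m + n ∧ d = n * (1 - ε) - m * ε := by
  obtain ⟨hε0, hε1⟩ := hε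
  obtain ⟨a, b, rfl, hab⟩ := hpos
  obtain ⟨hlow, hupp⟩ := abs_lt.mp hd
  have ha : 0 ≤ a := by
    by_contra! ha
    have ha' : (a : ℝ) ≤ -1 := mod_cast Int.le_sub_one_of_lt ha
    have hb : (b : ℝ) < 0 := by
      by_contra! hb
      linarith [mul_nonpos_of_nonneg_of_nonpos hb hε'.le]
    linarith [mul_neg_of_neg_of_pos hb hε0]
  have hs : a + b ≤ 0 := by
    by_contra! hs
    have ha0 : 0 < a := by
      refine ha.lt_of_ne fun h0 => ?_
      subst h0
      have hb : (0 : ℝ) < b := by simpa using hs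
      have hbε' := mul_neg_of_pos_of_neg hb hε'
      simp only [Int.cast_zero, zero_add] at hab
      linarith
    have ha1 : (1 : ℝ) ≤ a := mod_cast ha0
    have hs1 : (1 : ℝ) ≤ a + b := mod_cast hs
    have hge : 1 ≤ (a : ℝ) + b * ε := calc
      (1 : ℝ) = 1 * (1 - ε) + 1 * ε := by ring
      _ ≤ a * (1 - ε) + (a + b) * ε := by gcongr
      _ = a + b * ε := by ring
    linarith
  obtain ⟨n, rfl⟩ := Int.eq_ofNat_of_zero_le ha
  obtain ⟨m, hm⟩ := Int.eq_ofNat_of_zero_le (neg_nonneg.mpr hs)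
  obtain rfl : b = -(m + n) := by omega
  refine ⟨m, n, ?_, by push_cast; ring⟩
  by_contra! h0
  obtain ⟨rfl, rfl⟩ : m = 0 ∧ n = 0 := by omega
  simp at hab

end ConjPos

section IntervalExchange

variable {ε ε' l c x y : ℝ}

theorem mapsTo_T3 (hε : ε ∈ Ioo (0 : ℝ) 1) (hl₀ : max ε (1 - ε) ≤ l) :
    MapsTo (T3 ε l c) (Ico c (c + l)) (Ico c (c + l)) := by
  obtain ⟨hε0, hε1⟩ := hε
  obtain ⟨hεl, hεl'⟩ := max_le_iff.mp hl₀
  rintro x ⟨hx0, hx1⟩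
  unfold T3
  split_ifs <;> constructor <;> linarith

theorem exists_iterate_T3_eq (ε l c x : ℝ) (k : ℕ) :
    ∃ m n : ℕ, k ≤ m + n ∧ (T3 ε l c)^[k] x = x + (n * (1 - ε) - m * ε) := by
  induction k with
  | zero => exact ⟨0, 0, le_rfl, by simp⟩
  | succ k ih =>
    obtain ⟨m, n, hk, hkx⟩ := ih
    rw [iterate_succ_apply', hkx]
    unfold T3
    split_ifs
    · exact ⟨m, n + 1, by omega, by push_cast; ring⟩
    · exact ⟨m + 1, n + 1, by omega, by push_cast; ring⟩
    · exact ⟨m + 1, n, by omega, by push_cast; ring⟩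

theorem periodicPts_T3_eq_empty (hε : Irrational ε) : periodicPts (T3 ε l c) = ∅ := by
  refine eq_empty_of_forall_notMem fun x hx => ?_
  obtain ⟨k, hk, hkx⟩ := mem_periodicPts.mp hx
  obtain ⟨m, n, hmn, hx'⟩ := exists_iterate_T3_eq ε l c x k
  have hmul : ((m + n : ℕ) : ℝ) * ε = n := by
    rw [hkx.eq] at hx'
    push_cast
    linarith
  exact n.not_irrational (hmul ▸ hε.natCast_mul (m := m + n) (by omega))

/-- If the branch of `T` at `x` used a translation absent from the displacement, the end point of
the displacement would fall outside `[c, c + l)`. -/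
theorem exists_T3_add_displacement_eq (hε : ε ∈ Ioo (0 : ℝ) 1) (hl₁ : l ≤ 1) {m n : ℕ}
    (hmn : 0 < m + n) (hy : x + (n * (1 - ε) - m * ε) ∈ Ico c (c + l)) :
    ∃ m' n' : ℕ, m' + n' < m + n ∧
      T3 ε l c x + (n' * (1 - ε) - m' * ε) = x + (n * (1 - ε) - m * ε) := by
  obtain ⟨hε0, hε1⟩ := hε
  obtain ⟨hlow, hupp⟩ := hy
  have hn (hxε : x < c + ε) : n ≠ 0 := by
    rintro rfl
    have hm : (1 : ℝ) ≤ m := mod_cast hmn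
    have hmε : ε ≤ m * ε := le_mul_of_one_le_left hε0.le hm
    simp only [Nat.cast_zero, zero_mul, zero_sub] at hlow
    linarith
  have hm (hxl : c + l - 1 + ε ≤ x) : m ≠ 0 := by
    rintro rfl
    have hn : (1 : ℝ) ≤ n := mod_cast (zero_add n ▸ hmn)
    have hnε : 1 - ε ≤ n * (1 - ε) := le_mul_of_one_le_left (sub_nonneg.mpr hε1.le) hn
    simp only [Nat.cast_zero, zero_mul, sub_zero] at hupp
    linarith
  unfold T3
  split_ifs with hleft hmid
  · obtain ⟨n, rfl⟩ := Nat.exists_eq_succ_of_ne_zero (hn (by linarith))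
    exact ⟨m, n, by omega, by push_cast; ring⟩
  · obtain ⟨n, rfl⟩ := Nat.exists_eq_succ_of_ne_zero (hn hmid)
    obtain ⟨m, rfl⟩ := Nat.exists_eq_succ_of_ne_zero (hm (not_lt.mp hleft))
    exact ⟨m, n, by omega, by push_cast; ring⟩
  · obtain ⟨m, rfl⟩ := Nat.exists_eq_succ_of_ne_zero (hm (not_lt.mp hleft))
    exact ⟨m, n, by omega, by push_cast; ring⟩

theorem reaches_T3_of_nat_displacement (hε : ε ∈ Ioo (0 : ℝ) 1) (hl₀ : max ε (1 - ε) ≤ l)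
    (hl₁ : l ≤ 1) {m n : ℕ} (hmn : 0 < m + n) (hx : x ∈ Ico c (c + l))
    (hy : x + (n * (1 - ε) - m * ε) ∈ Ico c (c + l)) :
    Reaches (T3 ε l c) x (x + (n * (1 - ε) - m * ε)) := by
  induction hN : m + n using Nat.strong_induction_on generalizing m n x with
  | _ N ih =>
    obtain ⟨m', n', hlt, heq⟩ := exists_T3_add_displacement_eq hε hl₁ hmn hy
    rw [← heq] at hy ⊢
    obtain hzero | hpos := Nat.eq_zero_or_pos (m' + n')
    · obtain ⟨rfl, rfl⟩ : m' = 0 ∧ n' = 0 := by omega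
      simpa using reaches_apply (T3 ε l c) x
    · obtain ⟨k, -, hk⟩ := ih (m' + n') (hN ▸ hlt) hpos (mapsTo_T3 hε hl₀ hx) hy rfl
      exact ⟨k + 1, by omega, by rw [iterate_succ_apply, hk]⟩

theorem reaches_T3_iff_conjPos (hε : ε ∈ Ioo (0 : ℝ) 1) (hε' : ε' < 0) (hl₀ : max ε (1 - ε) ≤ l)
    (hl₁ : l ≤ 1) (hx : x ∈ Ico c (c + l)) (hy : y ∈ Ico c (c + l)) :
    Reaches (T3 ε l c) x y ↔ ConjPos ε ε' (y - x) := by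
  constructor
  · rintro ⟨k, hk, rfl⟩
    obtain ⟨m, n, hmn, hkx⟩ := exists_iterate_T3_eq ε l c x k
    rw [hkx, add_sub_cancel_left]
    exact conjPos_of_nat_displacement hε' (hk.trans hmn)
  · intro hpos
    have habs : |y - x| < 1 := abs_lt.mpr ⟨by linarith [hx.2, hy.1], by linarith [hx.1, hy.2]⟩
    obtain ⟨m, n, hmn, hd⟩ := exists_nat_displacement_of_conjPos hε hε' habs hpos
    obtain rfl : y = x + (n * (1 - ε) - m * ε) := by rw [← hd, add_sub_cancel]
    exact reaches_T3_of_nat_displacement hε hl₀ hl₁ hmn hx hy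

theorem reaches_T3_mul_iff (hε : ε ∈ Ioo (0 : ℝ) 1) (hε' : ε' < 0) (hl₀ : max ε (1 - ε) ≤ l)
    (hl₁ : l ≤ 1) (hc : (0 : ℝ) ∈ Ico c (c + l)) {r : ℝ} (hr : r ∈ Icc (0 : ℝ) 1)
    (hconj : ∀ d, ConjPos ε ε' (r * d) ↔ ConjPos ε ε' d)
    (hx : x ∈ Ico c (c + l)) (hy : y ∈ Ico c (c + l)) :
    Reaches (T3 ε l c) (r * x) (r * y) ↔ Reaches (T3 ε l c) x y := by
  have hmem {z : ℝ} (hz : z ∈ Ico c (c + l)) : r * z ∈ Ico c (c + l) :=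
    (convex_Ico c (c + l)).smul_mem_of_zero_mem hc hz hr
  rw [reaches_T3_iff_conjPos hε hε' hl₀ hl₁ (hmem hx) (hmem hy), ← mul_sub, hconj,
    reaches_T3_iff_conjPos hε hε' hl₀ hl₁ hx hy]

end IntervalExchange

theorem firstReturn_homothetic (ε : ℝ) (A B C : ℤ) (hA : A ≠ 0) (hε : Irrational ε)
    (hεm : ε ∈ Set.Ioo (0 : ℝ) 1)
    (hquad : (A : ℝ) * ε ^ 2 + (B : ℝ) * ε + (C : ℝ) = 0)
    (hconj : -(B : ℝ) / (A : ℝ) - ε < 0)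
    (p q : ℚ)
    (hunit : ((p : ℝ) + (q : ℝ) * ε) * ((p : ℝ) + (q : ℝ) * (-(B : ℝ) / (A : ℝ) - ε)) = 1 ∨
             ((p : ℝ) + (q : ℝ) * ε) * ((p : ℝ) + (q : ℝ) * (-(B : ℝ) / (A : ℝ) - ε)) = -1)
    (hZ : (fun z => ((p : ℝ) + (q : ℝ) * ε) * z) '' Zbr ε = Zbr ε)
    (hΛ : 1 < (p : ℝ) + (q : ℝ) * ε)
    (hΛ' : (p : ℝ) + (q : ℝ) * (-(B : ℝ) / (A : ℝ) - ε) ∈ Set.Ioo (0 : ℝ) 1)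
    (l c : ℝ) (hl₁ : max ε (1 - ε) < l) (hl₂ : l < 1) (hc₁ : c ≤ 0) (hc₂ : 0 < c + l) :
    ∀ x ∈ Set.Ico (((p : ℝ) + (q : ℝ) * (-(B : ℝ) / (A : ℝ) - ε)) * c)
        (((p : ℝ) + (q : ℝ) * (-(B : ℝ) / (A : ℝ) - ε)) * (c + l)),
      (∃ n : ℕ, 1 ≤ n ∧ (T3 ε l c)^[n] x ∈
        Set.Ico (((p : ℝ) + (q : ℝ) * (-(B : ℝ) / (A : ℝ) - ε)) * c)
          (((p : ℝ) + (q : ℝ) * (-(B : ℝ) / (A : ℝ) - ε)) * (c + l))) ∧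
      ∀ n : ℕ, 1 ≤ n →
        (T3 ε l c)^[n] x ∈
          Set.Ico (((p : ℝ) + (q : ℝ) * (-(B : ℝ) / (A : ℝ) - ε)) * c)
            (((p : ℝ) + (q : ℝ) * (-(B : ℝ) / (A : ℝ) - ε)) * (c + l)) →
        (∀ m : ℕ, 1 ≤ m → m < n → (T3 ε l c)^[m] x ∉
          Set.Ico (((p : ℝ) + (q : ℝ) * (-(B : ℝ) / (A : ℝ) - ε)) * c)
            (((p : ℝ) + (q : ℝ) * (-(B : ℝ) / (A : ℝ) - ε)) * (c + l))) →
        (T3 ε l c)^[n] x = ((p : ℝ) + (q : ℝ) * (-(B : ℝ) / (A : ℝ) - ε)) *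
          T3 ε l c (x / ((p : ℝ) + (q : ℝ) * (-(B : ℝ) / (A : ℝ) - ε))) := by
  have hεε' := isConjRoot_of_irrational_of_quadratic hA hε hquad
  generalize -(B : ℝ) / (A : ℝ) - ε = ε' at *
  have hΛ0 : 0 < (p : ℝ) + q * ε := one_pos.trans hΛ
  have hΛΛ' : ((p : ℝ) + q * ε) * (p + q * ε') = 1 :=
    hunit.resolve_right fun h => by linarith [mul_pos hΛ0 hΛ'.1]
  have hscale (d : ℝ) : ConjPos ε ε' ((p + q * ε') * d) ↔ ConjPos ε ε' d := by
    rw [← conjPos_mul_iff hεε' hZ hΛ0.ne' hΛ'.1, ← mul_assoc, hΛΛ', one_mul]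
  have hmaps : MapsTo (T3 ε l c) (Ico c (c + l)) (Ico c (c + l)) := mapsTo_T3 hεm hl₁.le
  have hreach : ∀ x ∈ Ico c (c + l), ∀ y ∈ Ico c (c + l),
      Reaches (T3 ε l c) ((p + q * ε') * x) ((p + q * ε') * y) ↔ Reaches (T3 ε l c) x y :=
    fun x hx y hy => reaches_T3_mul_iff hεm hconj hl₁.le hl₂.le ⟨hc₁, hc₂⟩
      (Ioo_subset_Icc_self hΛ') hscale hx hy
  rw [← image_mul_left_Ico hΛ'.1]
  rintro _ ⟨x, hx, rfl⟩
  rw [mul_div_cancel_left₀ x hΛ'.1.ne']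
  obtain ⟨k, hk, hkx⟩ := (hreach x hx _ (hmaps hx)).mpr (reaches_apply _ x)
  have hper : Disjoint (Ico c (c + l)) (periodicPts (T3 ε l c)) :=
    periodicPts_T3_eq_empty hε ▸ disjoint_empty _
  exact ⟨⟨k, hk, hkx ▸ mem_image_of_mem _ (hmaps hx)⟩, fun _ =>
    iterate_eq_of_firstReturn hmaps hper hreach hx⟩
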